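/- Let ν ≥ 1 be an integer and (M_k)_{k∈ℕ} a sequence of positive reals satisfying (M.0), (G), and (M.2) with constants A ≥ 1 and H ≥ 1, and let M(r) := sup_{k∈ℕ} log(r^{νk}/M_{νk}). Then for every r > 0: M(r/(√A·H)) ≤ (1/2)·M(r); equivalently, exp(−(1/2)M(r)) ≤ exp(−M(r/(√A·H))). -/

import Mathlib

/-- The associated function `M(r) = sup_{k ∈ ℕ} log ( r^{νk} / M_{νk} )`. -/
noncomputable def assocM (ν : ℕ) (Mk : ℕ → ℝ) (r : ℝ) : ℝ :=
  ⨆ k : ℕ, Real.log (r ^ (ν * k) / Mk (ν * k))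

/-!
Put `c = √A * H`. For `n ≥ 1` we have `A ≤ A ^ n`, so (M.2) gives `M₂ₙ ≤ (c ^ n * Mₙ) ^ 2`; for
`n = 0` this is (M.0). Hence the square of `(r / c) ^ n / Mₙ` is at most `r ^ (2 * n) / M₂ₙ`: twice
the `k`-th term of the supremum `M(r / c)` is bounded by the `2k`-th term of the supremum `M(r)`.
-/

theorem pow_div_le_mul_exp {r l C m : ℝ} {n : ℕ} (hr : 0 ≤ r) (hl : 0 < l) (hm : 0 < m)
    (h : (n.factorial : ℝ) ≤ C * l ^ n * m) : r ^ n / m ≤ C * Real.exp (l * r) := by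
  have hexp : (l * r) ^ n ≤ Real.exp (l * r) * n.factorial :=
    (div_le_iff₀ (by positivity)).1 (Real.pow_div_factorial_le_exp (l * r) (by positivity) n)
  rw [div_le_iff₀ hm]
  refine le_of_mul_le_mul_left ?_ (pow_pos hl n)
  calc l ^ n * r ^ n = (l * r) ^ n := (mul_pow l r n).symm
    _ ≤ Real.exp (l * r) * n.factorial := hexp
    _ ≤ Real.exp (l * r) * (C * l ^ n * m) := by gcongr
    _ = l ^ n * (C * Real.exp (l * r) * m) := by ring

theorem two_mul_log_div_pow_div_le {r c a b : ℝ} {n : ℕ} (hr : 0 < r) (hc : 0 < c) (ha : 0 < a)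
    (hb : 0 < b) (h : b ≤ (c ^ n * a) ^ 2) :
    2 * Real.log ((r / c) ^ n / a) ≤ Real.log (r ^ (2 * n) / b) := by
  have hsq : ((r / c) ^ n / a) ^ 2 ≤ r ^ (2 * n) / b :=
    calc ((r / c) ^ n / a) ^ 2 = r ^ (2 * n) / (c ^ n * a) ^ 2 := by
          rw [div_pow r c, div_div, div_pow, ← pow_mul, mul_comm n 2]
      _ ≤ r ^ (2 * n) / b := by gcongr
  calc 2 * Real.log ((r / c) ^ n / a) = Real.log (((r / c) ^ n / a) ^ 2) := by
        rw [Real.log_pow, Nat.cast_ofNat]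
    _ ≤ Real.log (r ^ (2 * n) / b) := Real.log_le_log (by positivity) hsq

section AssociatedFunction

variable {ν : ℕ} {Mk : ℕ → ℝ}

theorem bddAbove_range_log_of_factorial_le (hMpos : ∀ k, 0 < Mk k) {C l r : ℝ} (hl : 0 < l)
    (hr : 0 < r) (hG : ∀ k : ℕ, (k.factorial : ℝ) ≤ C * l ^ k * Mk k) :
    BddAbove (Set.range fun k : ℕ => Real.log (r ^ (ν * k) / Mk (ν * k))) := by
  refine ⟨Real.log (C * Real.exp (l * r)), Set.forall_mem_range.2 fun k => ?_⟩
  have hm : 0 < Mk (ν * k) := hMpos _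
  exact Real.log_le_log (by positivity) (pow_div_le_mul_exp hr.le hl hm (hG _))

theorem assocM_div_le_half (hMpos : ∀ k, 0 < Mk k) {c r : ℝ} (hc : 0 < c) (hr : 0 < r)
    (hM : ∀ n, Mk (2 * n) ≤ (c ^ n * Mk n) ^ 2)
    (hbdd : BddAbove (Set.range fun k : ℕ => Real.log (r ^ (ν * k) / Mk (ν * k)))) :
    assocM ν Mk (r / c) ≤ (1 / 2) * assocM ν Mk r := by
  refine ciSup_le fun k => ?_
  have hdouble := two_mul_log_div_pow_div_le hr hc (hMpos _) (hMpos _) (hM (ν * k))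
  have hterm : Real.log (r ^ (2 * (ν * k)) / Mk (2 * (ν * k))) ≤ assocM ν Mk r := by
    rw [mul_left_comm]
    exact le_ciSup hbdd (2 * k)
  linarith

end AssociatedFunction

theorem le_sqrt_mul_pow_mul_sq {Mk : ℕ → ℝ} {A H : ℝ} (hM0 : 1 ≤ Mk 0) (hA : 1 ≤ A)
    (hM2 : ∀ k : ℕ, Mk (2 * k) ≤ A * H ^ (2 * k) * Mk k ^ 2) (n : ℕ) :
    Mk (2 * n) ≤ ((√A * H) ^ n * Mk n) ^ 2 := by
  rcases eq_or_ne n 0 with rfl | hn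
  · simpa only [mul_zero, pow_zero, one_mul] using le_self_pow₀ hM0 two_ne_zero
  · have hH : 0 ≤ H ^ (2 * n) := (even_two_mul n).pow_nonneg H
    calc Mk (2 * n) ≤ A * H ^ (2 * n) * Mk n ^ 2 := hM2 n
      _ ≤ A ^ n * H ^ (2 * n) * Mk n ^ 2 := by gcongr; exact le_self_pow₀ hA hn
      _ = (√A ^ 2) ^ n * H ^ (2 * n) * Mk n ^ 2 := by rw [Real.sq_sqrt (by positivity)]
      _ = ((√A * H) ^ n * Mk n) ^ 2 := by ring

theorem stmt_6_general {ν : ℕ} {Mk : ℕ → ℝ} (hMpos : ∀ k, 0 < Mk k) (hM0 : 1 ≤ Mk 0)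
    {A H : ℝ} (hA : 1 ≤ A) (hH : 0 < H)
    (hM2 : ∀ k : ℕ, Mk (2 * k) ≤ A * H ^ (2 * k) * Mk k ^ 2) {r : ℝ} (hr : 0 < r)
    (hbdd : BddAbove (Set.range fun k : ℕ => Real.log (r ^ (ν * k) / Mk (ν * k)))) :
    assocM ν Mk (r / (√A * H)) ≤ (1 / 2) * assocM ν Mk r :=
  assocM_div_le_half hMpos (by positivity) hr (le_sqrt_mul_pow_mul_sq hM0 hA hM2) hbdd

theorem stmt_6 (ν : ℕ) (hν : 1 ≤ ν) (Mk : ℕ → ℝ) (hMpos : ∀ k, 0 < Mk k)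
    (hM0 : Mk 0 = 1)
    (A H : ℝ) (hA : 1 ≤ A) (hH : 1 ≤ H)
    (hM2 : ∀ k : ℕ, Mk (2 * k) ≤ A * H ^ (2 * k) * Mk k ^ 2)
    (hG : ∃ C₀ > (0 : ℝ), ∃ l > (0 : ℝ), ∀ k : ℕ, (k.factorial : ℝ) ≤ C₀ * l ^ k * Mk k) :
    ∀ r : ℝ, 0 < r →
      assocM ν Mk (r / (Real.sqrt A * H)) ≤ (1 / 2) * assocM ν Mk r := by
  obtain ⟨C₀, -, l, hl, hG⟩ := hG
  exact fun r hr => stmt_6_general hMpos hM0.ge hA (zero_lt_one.trans_le hH) hM2 hr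
    (bddAbove_range_log_of_factorial_le hMpos hl hr hG)
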